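/- In the exponential case, the indifference premium satisfies the backward recursion H_T(Z) = Z and H_t(Z) = (1/β_{t+1}) log E[ e^{β_{t+1} H_{t+1}(Z)} | 𝓕_t ] for t = 0,…,T−1, and admits the dual representation H_t(Z) = esssup_{(M_s)∈𝓜_t^0} { E[M_T Z | 𝓕_t] − Σ_{s=t}^T (1/α_s) E[M_s log M_s | 𝓕_t] } for t = 0,…,T, where 𝓜_t^0 is the set of positive martingales (M_s)_{s=t,…,T} with M_t = 1. -/

import Mathlib

open MeasureTheory Filter

variable {Ω : Type*}

/-- `X ∈ L^∞(m)`: `m`-measurable and (essentially) bounded. -/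
def MeasBdd (m : MeasurableSpace Ω) (X : Ω → ℝ) : Prop :=
  Measurable[m] X ∧ ∃ C : ℝ, ∀ ω, |X ω| ≤ C

/-- `u` is a utility function (strictly increasing, strictly concave, `C¹`) with
derivative `u'` satisfying `u 0 = 0`, `u' 0 = 1`, `u'(+∞) = 0`, `u'(-∞) = +∞`. -/
structure IsUtility (u u' : ℝ → ℝ) : Prop where
  strictMono : StrictMono u
  strictConcave : StrictConcaveOn ℝ Set.univ u
  hasDeriv : ∀ x, HasDerivAt u (u' x) x
  derivCont : Continuous u'
  zero : u 0 = 0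
  deriv_zero : u' 0 = 1
  deriv_top : Tendsto u' atTop (nhds 0)
  deriv_bot : Tendsto u' atBot atTop

/-- A one-product diversification of `Z` at time `t`: an adapted family `(X s)`,
`s = t,…,T`, of essentially bounded random variables summing to `Z`. -/
def IsDiv1 {m0 : MeasurableSpace Ω} (P : Measure Ω) (ℱ : Filtration ℕ m0)
    (t T : ℕ) (Z : Ω → ℝ) (X : ℕ → Ω → ℝ) : Prop :=
  (∀ s ∈ Finset.Icc t T, MeasBdd (ℱ s) (X s)) ∧
  ∀ᵐ ω ∂P, (∑ s ∈ Finset.Icc t T, X s ω) = Z ω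

/-- The total conditional expected utility `∑_{s=t}^T E[u_s(X_s) | 𝓕_t]`. -/
noncomputable def utilSum1 {m0 : MeasurableSpace Ω} (P : Measure Ω) (ℱ : Filtration ℕ m0)
    (u : ℕ → ℝ → ℝ) (t T : ℕ) (X : ℕ → Ω → ℝ) : Ω → ℝ :=
  fun ω => ∑ s ∈ Finset.Icc t T, (P[fun ω' => u s (X s ω') | ℱ t]) ω

/-- `g` is an essential supremum of the family `S` of random variables under `P`. -/
def IsEssSupOf {m0 : MeasurableSpace Ω} (P : Measure Ω) (S : Set (Ω → ℝ)) (g : Ω → ℝ) : Prop :=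
  (∀ f ∈ S, f ≤ᵐ[P] g) ∧ ∀ h : Ω → ℝ, (∀ f ∈ S, f ≤ᵐ[P] h) → g ≤ᵐ[P] h

/-- `g` is an essential infimum of the family `S` of random variables under `P`. -/
def IsEssInfOf {m0 : MeasurableSpace Ω} (P : Measure Ω) (S : Set (Ω → ℝ)) (g : Ω → ℝ) : Prop :=
  (∀ f ∈ S, g ≤ᵐ[P] f) ∧ ∀ h : Ω → ℝ, (∀ f ∈ S, h ≤ᵐ[P] f) → h ≤ᵐ[P] g

/-- `(M s)_{s=t,…,T} ∈ 𝓜_t^0`: positive integrable martingale with `M t = 1`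
(and `M_s log M_s` integrable). -/
def IsPosMartOne {m0 : MeasurableSpace Ω} (P : Measure Ω) (ℱ : Filtration ℕ m0)
    (t T : ℕ) (M : ℕ → Ω → ℝ) : Prop :=
  (∀ s ∈ Finset.Icc t T,
    Measurable[ℱ s] (M s) ∧ Integrable (M s) P ∧ (∀ᵐ ω ∂P, 0 < M s ω) ∧
      Integrable (fun ω => M s ω * Real.log (M s ω)) P) ∧
  (∀ r ∈ Finset.Icc t T, ∀ s ∈ Finset.Icc t T, r ≤ s →
    (P[M s | ℱ r]) =ᵐ[P] M r) ∧
  (∀ᵐ ω ∂P, M t ω = 1)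

/-!
The exponential utility `u_a` has convex conjugate `a⁻¹ • klFun`, that is
`u_a x ≤ m * x + a⁻¹ * klFun m` with equality at `m = exp (-a * x)`. Summing over time and
pairing the adapted family `X` with a martingale `M` bounds the expected utility of every
diversification of `W` by `E[M_T W | 𝓕_t] + ∑ E[klFun M_s | 𝓕_t] / α_s`, with equality when
`M_s = exp (-α_s X_s)` for all `s`.

Let `G` solve the backward recursion with `G_T = Z`. The process with
`L_{s+1} - L_s = β_{s+1} (G_{s+1} - G_s)` and `L_t = β_t (G_t - K)` makes `exp L` a martingale,
and the definition of `β` makes `X_s = -L_s / α_s` a diversification of `K - Z`. This pair attains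
the bound, so `U_t(K - Z) = u_{β_t}(K - G_t)`, whence `H_t(Z) = G_t`. Testing the same `X` for
`K = G_t` against an arbitrary `M ∈ 𝓜_t^0` gives the dual representation.
-/

open InformationTheory (klFun klFun_apply)

variable {m m0 : MeasurableSpace Ω} {P : Measure Ω}

namespace MeasBdd

variable {X Y M : Ω → ℝ}

lemma mono {m' : MeasurableSpace Ω} (hX : MeasBdd m X) (hm : m ≤ m') : MeasBdd m' X :=
  ⟨hX.1.mono hm le_rfl, hX.2⟩

lemma const (c : ℝ) : MeasBdd m (fun _ : Ω => c) :=
  ⟨measurable_const, |c|, fun _ => le_rfl⟩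

lemma add (hX : MeasBdd m X) (hY : MeasBdd m Y) : MeasBdd m (fun ω => X ω + Y ω) := by
  obtain ⟨hXm, C, hC⟩ := hX
  obtain ⟨hYm, D, hD⟩ := hY
  exact ⟨hXm.add hYm, C + D, fun ω => (abs_add_le _ _).trans (add_le_add (hC ω) (hD ω))⟩

lemma const_mul (c : ℝ) (hX : MeasBdd m X) : MeasBdd m (fun ω => c * X ω) := by
  obtain ⟨hXm, C, hC⟩ := hX
  refine ⟨hXm.const_mul c, |c| * C, fun ω => ?_⟩
  rw [abs_mul]
  gcongr
  exact hC ω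

lemma sub (hX : MeasBdd m X) (hY : MeasBdd m Y) : MeasBdd m (fun ω => X ω - Y ω) := by
  simpa only [neg_one_mul, ← sub_eq_add_neg] using hX.add (hY.const_mul (-1))

lemma sum {ι : Type*} (s : Finset ι) {X : ι → Ω → ℝ} (hX : ∀ i ∈ s, MeasBdd m (X i)) :
    MeasBdd m (fun ω => ∑ i ∈ s, X i ω) := by
  choose! C hC using fun i hi => (hX i hi).2
  exact ⟨Finset.measurable_fun_sum s fun i hi => (hX i hi).1, ∑ i ∈ s, C i, fun ω =>
    (Finset.abs_sum_le_sum_abs _ _).trans (Finset.sum_le_sum fun i hi => hC i hi ω)⟩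

lemma exp (hX : MeasBdd m X) : MeasBdd m (fun ω => Real.exp (X ω)) := by
  obtain ⟨hXm, C, hC⟩ := hX
  refine ⟨hXm.exp, Real.exp C, fun ω => ?_⟩
  rw [Real.abs_exp]
  exact Real.exp_le_exp.2 ((le_abs_self _).trans (hC ω))

lemma integrable_mul (hX : MeasBdd m0 X) (hM : Integrable M P) :
    Integrable (fun ω => M ω * X ω) P := by
  obtain ⟨hXm, C, hC⟩ := hX
  exact hM.mul_bdd hXm.aestronglyMeasurable (Eventually.of_forall hC)

lemma integrable [IsFiniteMeasure P] (hX : MeasBdd m0 X) : Integrable X P := by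
  simpa only [one_mul] using hX.integrable_mul (integrable_const (1 : ℝ))

lemma condExp_mul (hm : m ≤ m0) (hX : MeasBdd m X) (hM : Integrable M P) :
    P[fun ω => M ω * X ω | m] =ᵐ[P] fun ω => (P[M | m]) ω * X ω :=
  condExp_mul_of_stronglyMeasurable_right hX.1.stronglyMeasurable
    ((hX.mono hm).integrable_mul hM) hM

end MeasBdd

lemma exists_measurable_mem_Icc_condExp_ae_eq [IsFiniteMeasure P] (hm : m ≤ m0) {f : Ω → ℝ}
    {a b : ℝ} (hab : a ≤ b) (hf : Integrable f P) (hfab : ∀ᵐ ω ∂P, f ω ∈ Set.Icc a b) :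
    ∃ g : Ω → ℝ, Measurable[m] g ∧ (∀ ω, g ω ∈ Set.Icc a b) ∧ P[f | m] =ᵐ[P] g := by
  have lower : P[fun _ => a | m] ≤ᵐ[P] P[f | m] :=
    condExp_mono (integrable_const a) hf (hfab.mono fun _ h => h.1)
  have upper : P[f | m] ≤ᵐ[P] P[fun _ => b | m] :=
    condExp_mono hf (integrable_const b) (hfab.mono fun _ h => h.2)
  rw [condExp_const hm] at lower upper
  refine ⟨fun ω => max a (min b ((P[f | m]) ω)),
    measurable_const.max (measurable_const.min stronglyMeasurable_condExp.measurable),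
    fun ω => ⟨le_max_left _ _, max_le hab (min_le_left _ _)⟩, ?_⟩
  filter_upwards [lower, upper] with ω hlower hupper
  rw [min_eq_right hupper, max_eq_right hlower]

lemma MeasBdd.exists_condExp_exp_mul_ae_eq [IsFiniteMeasure P] (hm : m ≤ m0) {Y : Ω → ℝ}
    (hY : MeasBdd m0 Y) {b : ℝ} (hb : b ≠ 0) :
    ∃ X, MeasBdd m X ∧
      P[fun ω => Real.exp (b * Y ω) | m] =ᵐ[P] fun ω => Real.exp (b * X ω) := by
  have hbY := hY.const_mul b
  obtain ⟨C, hC0, hC⟩ : ∃ C, 0 ≤ C ∧ ∀ ω, |b * Y ω| ≤ C :=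
    hbY.2.imp' abs fun C hC => ⟨abs_nonneg C, fun ω => (hC ω).trans (le_abs_self C)⟩
  have hexp (ω : Ω) : Real.exp (b * Y ω) ∈ Set.Icc (Real.exp (-C)) (Real.exp C) :=
    ⟨Real.exp_le_exp.2 (abs_le.1 (hC ω)).1, Real.exp_le_exp.2 (abs_le.1 (hC ω)).2⟩
  obtain ⟨g, hgm, hgC, hg⟩ := exists_measurable_mem_Icc_condExp_ae_eq hm
    (Real.exp_le_exp.2 (neg_le_self hC0)) (hbY.exp.integrable (P := P)) (Eventually.of_forall hexp)
  have hgpos (ω : Ω) : 0 < g ω := (Real.exp_pos _).trans_le (hgC ω).1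
  have hlog : MeasBdd m fun ω => Real.log (g ω) :=
    ⟨hgm.log, C, fun ω => abs_le.2 ⟨(Real.le_log_iff_exp_le (hgpos ω)).2 (hgC ω).1,
      (Real.log_le_iff_le_exp (hgpos ω)).2 (hgC ω).2⟩⟩
  refine ⟨fun ω => b⁻¹ * Real.log (g ω), hlog.const_mul b⁻¹, ?_⟩
  simpa only [mul_inv_cancel_left₀ hb, Real.exp_log (hgpos _)] using hg

namespace IsEssSupOf

variable {S : Set (Ω → ℝ)} {f g : Ω → ℝ}

lemma of_mem (hle : ∀ f ∈ S, f ≤ᵐ[P] g) (hf : f ∈ S) (hfg : f =ᵐ[P] g) : IsEssSupOf P S g :=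
  ⟨hle, fun _ hh => hfg.symm.le.trans (hh f hf)⟩

lemma ae_eq (hf : IsEssSupOf P S f) (hg : IsEssSupOf P S g) : f =ᵐ[P] g :=
  (hf.2 g hg.1).antisymm (hg.2 f hf.1)

lemma congr_ae (hf : IsEssSupOf P S f) (hfg : f =ᵐ[P] g) : IsEssSupOf P S g :=
  ⟨fun k hk => (hf.1 k hk).trans hfg.le, fun h hh => hfg.symm.le.trans (hf.2 h hh)⟩

end IsEssSupOf

/-- The normalised exponential utility function with risk aversion `a`. -/
noncomputable def expUtility (a x : ℝ) : ℝ := a⁻¹ * (1 - Real.exp (-a * x))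

lemma expUtility_zero_right (a : ℝ) : expUtility a 0 = 0 := by simp [expUtility]

lemma expUtility_nonneg_iff {a x : ℝ} (ha : 0 < a) : 0 ≤ expUtility a x ↔ 0 ≤ x := by
  rw [expUtility, mul_nonneg_iff_of_pos_left (inv_pos.2 ha), sub_nonneg, Real.exp_le_one_iff,
    neg_mul, neg_nonpos, mul_nonneg_iff_of_pos_left ha]

lemma MeasBdd.expUtility {X : Ω → ℝ} (hX : MeasBdd m X) (a : ℝ) :
    MeasBdd m (fun ω => expUtility a (X ω)) :=
  ((MeasBdd.const 1).sub (hX.const_mul (-a)).exp).const_mul a⁻¹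

lemma expUtility_le_mul_add_klFun {a m : ℝ} (ha : 0 < a) (hm : 0 ≤ m) (x : ℝ) :
    expUtility a x ≤ m * x + a⁻¹ * klFun m := by
  have young : 1 - Real.exp (-a * x) ≤ a * (m * x) + klFun m := by
    rw [klFun_apply]
    rcases hm.eq_or_lt with rfl | hm
    · simpa using (Real.exp_pos _).le
    · have hexp := Real.add_one_le_exp (-a * x - Real.log m)
      rw [Real.exp_sub, Real.exp_log hm, le_div_iff₀ hm] at hexp
      linarith
  calc expUtility a x ≤ a⁻¹ * (a * (m * x) + klFun m) :=
        mul_le_mul_of_nonneg_left young (inv_pos.2 ha).le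
    _ = m * x + a⁻¹ * klFun m := by rw [mul_add, inv_mul_cancel_left₀ ha.ne']

lemma expUtility_eq_exp_mul_add_klFun {a : ℝ} (ha : a ≠ 0) (x : ℝ) :
    expUtility a x = Real.exp (-a * x) * x + a⁻¹ * klFun (Real.exp (-a * x)) := by
  rw [expUtility, klFun_apply, Real.log_exp]
  field_simp
  ring

variable {ℱ : Filtration ℕ m0} {t T : ℕ} {α β : ℕ → ℝ} {G M X : ℕ → Ω → ℝ} {K W Z : Ω → ℝ}

lemma condExp_ae_eq_of_condExp_succ_ae_eq [IsFiniteMeasure P]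
    (hmeas : ∀ s ∈ Finset.Icc t T, StronglyMeasurable[ℱ s] (M s))
    (hint : ∀ s ∈ Finset.Icc t T, Integrable (M s) P)
    (hsucc : ∀ s ∈ Finset.Ico t T, P[M (s + 1) | ℱ s] =ᵐ[P] M s)
    {r s : ℕ} (htr : t ≤ r) (hrs : r ≤ s) (hsT : s ≤ T) : P[M s | ℱ r] =ᵐ[P] M r := by
  induction s, hrs using Nat.le_induction with
  | base =>
    have hr : r ∈ Finset.Icc t T := Finset.mem_Icc.2 ⟨htr, hsT⟩
    rw [condExp_of_stronglyMeasurable (ℱ.le r) (hmeas r hr) (hint r hr)]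
  | succ s hrs ih =>
    calc P[M (s + 1) | ℱ r]
        =ᵐ[P] P[P[M (s + 1) | ℱ s] | ℱ r] :=
          (condExp_condExp_of_le (ℱ.mono hrs) (ℱ.le s)).symm
      _ =ᵐ[P] P[M s | ℱ r] :=
          condExp_congr_ae (hsucc s (Finset.mem_Ico.2 ⟨htr.trans hrs, hsT⟩))
      _ =ᵐ[P] M r := ih (Nat.le_of_succ_le hsT)

/-- A nonnegative martingale `(M s)_{s=t,…,T}` of finite entropy, with arbitrary initial value:
the dual variable of the utility maximisation problem. The martingale property is recorded only
towards the terminal time `T`. -/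
structure IsEntropyMartingale (P : Measure Ω) (ℱ : Filtration ℕ m0) (t T : ℕ)
    (M : ℕ → Ω → ℝ) : Prop where
  integrable : ∀ s ∈ Finset.Icc t T, Integrable (M s) P
  nonneg : ∀ s ∈ Finset.Icc t T, 0 ≤ᵐ[P] M s
  integrable_klFun : ∀ s ∈ Finset.Icc t T, Integrable (fun ω => klFun (M s ω)) P
  condExp_ae_eq : ∀ s ∈ Finset.Icc t T, P[M T | ℱ s] =ᵐ[P] M s

lemma IsPosMartOne.isEntropyMartingale [IsFiniteMeasure P] (ht : t ≤ T)
    (hM : IsPosMartOne P ℱ t T M) : IsEntropyMartingale P ℱ t T M where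
  integrable s hs := (hM.1 s hs).2.1
  nonneg s hs := (hM.1 s hs).2.2.1.mono fun _ => le_of_lt
  integrable_klFun s hs := by
    obtain ⟨-, hint, -, hlog⟩ := hM.1 s hs
    exact (hlog.add (integrable_const 1)).sub hint
  condExp_ae_eq s hs :=
    hM.2.1 s hs T (Finset.right_mem_Icc.2 ht) (Finset.mem_Icc.1 hs).2

/-- The conditional Lagrangian dual `E[M_T W | 𝓕_t] + ∑ E[klFun M_s | 𝓕_t] / α_s` of the problem
of maximising the exponential utility of a diversification of `W`. -/
noncomputable def dualObjective (P : Measure Ω) (ℱ : Filtration ℕ m0) (α : ℕ → ℝ) (t T : ℕ)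
    (W : Ω → ℝ) (M : ℕ → Ω → ℝ) : Ω → ℝ :=
  fun ω => (P[fun ω' => M T ω' * W ω' | ℱ t]) ω +
    ∑ s ∈ Finset.Icc t T, (α s)⁻¹ * (P[fun ω' => klFun (M s ω') | ℱ t]) ω

lemma IsEntropyMartingale.condExp_terminal_mul [IsFiniteMeasure P]
    (hM : IsEntropyMartingale P ℱ t T M) (ht : t ≤ T) (hX : IsDiv1 P ℱ t T W X) :
    P[fun ω => M T ω * W ω | ℱ t] =ᵐ[P]
      fun ω => ∑ s ∈ Finset.Icc t T, (P[fun ω' => M s ω' * X s ω' | ℱ t]) ω := by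
  have hMT := hM.integrable T (Finset.right_mem_Icc.2 ht)
  have hterm (s) (hs : s ∈ Finset.Icc t T) : P[fun ω => M T ω * X s ω | ℱ t] =ᵐ[P]
      P[fun ω => M s ω * X s ω | ℱ t] := by
    refine (condExp_condExp_of_le (ℱ.mono (Finset.mem_Icc.1 hs).1) (ℱ.le s)).symm.trans
      (condExp_congr_ae ?_)
    filter_upwards [(hX.1 s hs).condExp_mul (ℱ.le s) hMT, hM.condExp_ae_eq s hs] with ω hmul hMs
    rw [hmul, hMs]
  have hsplit : (fun ω => M T ω * W ω) =ᵐ[P] ∑ s ∈ Finset.Icc t T, fun ω => M T ω * X s ω := by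
    filter_upwards [hX.2] with ω hω
    rw [Finset.sum_apply, ← Finset.mul_sum, hω]
  filter_upwards [condExp_congr_ae hsplit, condExp_finsetSum (fun s hs =>
      ((hX.1 s hs).mono (ℱ.le s)).integrable_mul hMT) (ℱ t),
    (Finset.eventually_all _).2 hterm] with ω hω hsum hterms
  rw [hω, hsum, Finset.sum_apply]
  exact Finset.sum_congr rfl hterms

lemma IsEntropyMartingale.dualObjective_ae_eq_sum [IsFiniteMeasure P]
    (hM : IsEntropyMartingale P ℱ t T M) (ht : t ≤ T) (hX : IsDiv1 P ℱ t T W X) :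
    dualObjective P ℱ α t T W M =ᵐ[P] fun ω => ∑ s ∈ Finset.Icc t T,
      (P[fun ω' => M s ω' * X s ω' + (α s)⁻¹ * klFun (M s ω') | ℱ t]) ω := by
  have hterm (s) (hs : s ∈ Finset.Icc t T) :
      P[fun ω => M s ω * X s ω + (α s)⁻¹ * klFun (M s ω) | ℱ t] =ᵐ[P]
        fun ω => (P[fun ω' => M s ω' * X s ω' | ℱ t]) ω +
          (α s)⁻¹ * (P[fun ω' => klFun (M s ω') | ℱ t]) ω :=
    (condExp_add (((hX.1 s hs).mono (ℱ.le s)).integrable_mul (hM.integrable s hs))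
      ((hM.integrable_klFun s hs).const_mul _) (ℱ t)).trans
        (EventuallyEq.rfl.add (condExp_smul (α s)⁻¹ _ (ℱ t)))
  filter_upwards [hM.condExp_terminal_mul ht hX, (Finset.eventually_all _).2 hterm]
    with ω hpair hterms
  rw [dualObjective, hpair, ← Finset.sum_add_distrib]
  exact (Finset.sum_congr rfl hterms).symm

theorem IsEntropyMartingale.utilSum1_le_dualObjective [IsFiniteMeasure P]
    (hM : IsEntropyMartingale P ℱ t T M) (ht : t ≤ T) (hX : IsDiv1 P ℱ t T W X)
    (hα : ∀ s ∈ Finset.Icc t T, 0 < α s) :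
    utilSum1 P ℱ (fun s => expUtility (α s)) t T X ≤ᵐ[P] dualObjective P ℱ α t T W M := by
  have hterm (s) (hs : s ∈ Finset.Icc t T) : P[fun ω => expUtility (α s) (X s ω) | ℱ t] ≤ᵐ[P]
      P[fun ω => M s ω * X s ω + (α s)⁻¹ * klFun (M s ω) | ℱ t] := by
    have hXs := (hX.1 s hs).mono (ℱ.le s)
    refine condExp_mono (hXs.expUtility _).integrable
      ((hXs.integrable_mul (hM.integrable s hs)).add ((hM.integrable_klFun s hs).const_mul _)) ?_
    filter_upwards [hM.nonneg s hs] with ω hω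
    exact expUtility_le_mul_add_klFun (hα s hs) hω _
  filter_upwards [hM.dualObjective_ae_eq_sum (α := α) ht hX, (Finset.eventually_all _).2 hterm]
    with ω hdual hterms
  rw [hdual]
  exact Finset.sum_le_sum hterms

theorem IsEntropyMartingale.utilSum1_ae_eq_dualObjective [IsFiniteMeasure P]
    (hM : IsEntropyMartingale P ℱ t T M) (ht : t ≤ T) (hX : IsDiv1 P ℱ t T W X)
    (hα : ∀ s ∈ Finset.Icc t T, α s ≠ 0)
    (hMX : ∀ s ∈ Finset.Icc t T, ∀ ω, M s ω = Real.exp (-α s * X s ω)) :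
    utilSum1 P ℱ (fun s => expUtility (α s)) t T X =ᵐ[P] dualObjective P ℱ α t T W M := by
  refine EventuallyEq.trans (EventuallyEq.of_eq ?_) (hM.dualObjective_ae_eq_sum ht hX).symm
  funext ω
  refine Finset.sum_congr rfl fun s hs => ?_
  simp only [hMX s hs, ← expUtility_eq_exp_mul_add_klFun (hα s hs)]

/-- The penalised expectation `E[M_T Z | 𝓕_t] - ∑ E[M_s log M_s | 𝓕_t] / α_s` of the dual
representation. -/
noncomputable def entropicObjective (P : Measure Ω) (ℱ : Filtration ℕ m0) (α : ℕ → ℝ) (t T : ℕ)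
    (Z : Ω → ℝ) (M : ℕ → Ω → ℝ) : Ω → ℝ :=
  fun ω => (P[fun ω' => M T ω' * Z ω' | ℱ t]) ω -
    ∑ s ∈ Finset.Icc t T, (α s)⁻¹ * (P[fun ω' => M s ω' * Real.log (M s ω') | ℱ t]) ω

lemma IsPosMartOne.condExp_ae_eq_one (hM : IsPosMartOne P ℱ t T M) {s : ℕ}
    (hs : s ∈ Finset.Icc t T) : P[M s | ℱ t] =ᵐ[P] 1 := by
  obtain ⟨hts, hsT⟩ := Finset.mem_Icc.1 hs
  exact (hM.2.1 t (Finset.left_mem_Icc.2 (hts.trans hsT)) s hs hts).trans hM.2.2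

lemma IsPosMartOne.condExp_klFun_ae_eq [IsFiniteMeasure P] (hM : IsPosMartOne P ℱ t T M) {s : ℕ}
    (hs : s ∈ Finset.Icc t T) :
    P[fun ω => klFun (M s ω) | ℱ t] =ᵐ[P] P[fun ω => M s ω * Real.log (M s ω) | ℱ t] := by
  obtain ⟨-, hint, -, hlog⟩ := hM.1 s hs
  have hone : Integrable (fun _ : Ω => (1 : ℝ)) P := integrable_const 1
  have hadd := condExp_add hlog hone (ℱ t)
  rw [condExp_const (ℱ.le t)] at hadd
  filter_upwards [condExp_sub (hlog.add hone) hint (ℱ t), hadd, hM.condExp_ae_eq_one hs]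
    with ω hsub hadd hMs
  change (P[(fun ω => M s ω * Real.log (M s ω)) + (fun _ => 1) - M s | ℱ t]) ω = _
  rw [hsub, Pi.sub_apply, hadd, hMs]
  simp

lemma IsPosMartOne.condExp_terminal_mul_sub_ae_eq (hM : IsPosMartOne P ℱ t T M) (ht : t ≤ T)
    (hK : MeasBdd (ℱ t) K) (hZ : MeasBdd (ℱ T) Z) :
    P[fun ω => M T ω * (K ω - Z ω) | ℱ t] =ᵐ[P]
      fun ω => K ω - (P[fun ω' => M T ω' * Z ω' | ℱ t]) ω := by
  have hTmem : T ∈ Finset.Icc t T := Finset.right_mem_Icc.2 ht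
  have hMT : Integrable (M T) P := (hM.1 T hTmem).2.1
  have hsub := condExp_sub ((hK.mono (ℱ.le t)).integrable_mul hMT)
    ((hZ.mono (ℱ.le T)).integrable_mul hMT) (ℱ t)
  filter_upwards [hsub, hK.condExp_mul (ℱ.le t) hMT, hM.condExp_ae_eq_one hTmem]
    with ω hsub hKω hMω
  simp only [mul_sub]
  refine hsub.trans ?_
  rw [Pi.sub_apply, hKω, hMω, Pi.one_apply, one_mul]

lemma IsPosMartOne.dualObjective_sub_ae_eq [IsFiniteMeasure P] (hM : IsPosMartOne P ℱ t T M)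
    (ht : t ≤ T) (hK : MeasBdd (ℱ t) K) (hZ : MeasBdd (ℱ T) Z) :
    dualObjective P ℱ α t T (fun ω => K ω - Z ω) M =ᵐ[P]
      fun ω => K ω - entropicObjective P ℱ α t T Z M ω := by
  filter_upwards [hM.condExp_terminal_mul_sub_ae_eq ht hK hZ,
    (Finset.eventually_all _).2 fun s hs => hM.condExp_klFun_ae_eq (s := s) hs] with ω hpair hkl
  rw [dualObjective, entropicObjective, hpair, sub_sub_eq_add_sub, sub_add_eq_add_sub]
  congr 2
  exact Finset.sum_congr rfl fun s hs => by rw [hkl s hs]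

/-- A bounded adapted process `G` satisfying, up to time `T`, the entropic backward recursion
`G_s = β_{s+1}⁻¹ log E[exp (β_{s+1} G_{s+1}) | 𝓕_s]`, stated without the logarithm. -/
structure IsEntropicProcess (P : Measure Ω) (ℱ : Filtration ℕ m0) (T : ℕ) (β : ℕ → ℝ)
    (G : ℕ → Ω → ℝ) : Prop where
  measBdd : ∀ s ≤ T, MeasBdd (ℱ s) (G s)
  condExp_exp_succ : ∀ s < T, P[fun ω => Real.exp (β (s + 1) * G (s + 1) ω) | ℱ s] =ᵐ[P]
    fun ω => Real.exp (β (s + 1) * G s ω)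

lemma exists_seq_of_backward_step {E : Type*} {p : ℕ → E → Prop} {R : ℕ → E → E → Prop} {T : ℕ}
    (step : ∀ s < T, ∀ y, p (s + 1) y → ∃ x, p s x ∧ R s x y) {z : E} (hz : p T z) :
    ∃ G : ℕ → E, G T = z ∧ (∀ s ≤ T, p s (G s)) ∧ ∀ s < T, R s (G s) (G (s + 1)) := by
  induction T generalizing z with
  | zero =>
    exact ⟨fun _ => z, rfl, fun s hs => Nat.le_zero.1 hs ▸ hz,
      fun s hs => absurd hs s.not_lt_zero⟩
  | succ T ih =>
    obtain ⟨x, hx, hxz⟩ := step T T.lt_succ_self z hz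
    obtain ⟨G, rfl, hp, hR⟩ := ih (fun s hs => step s (hs.trans T.lt_succ_self)) hx
    refine ⟨Function.update G (T + 1) z, Function.update_self .., fun s hs => ?_, fun s hs => ?_⟩
    · rcases hs.eq_or_lt with rfl | hs
      · rwa [Function.update_self]
      · rw [Function.update_of_ne hs.ne]
        exact hp s (Nat.lt_succ_iff.1 hs)
    · rw [Function.update_of_ne hs.ne]
      rcases (Nat.lt_succ_iff.1 hs).eq_or_lt with rfl | hs
      · rwa [Function.update_self]
      · rw [Function.update_of_ne (by omega)]
        exact hR s hs

namespace IsEntropicProcess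

theorem exists_terminal_eq [IsFiniteMeasure P] (hβ : ∀ s ≤ T, β s ≠ 0) (hZ : MeasBdd (ℱ T) Z) :
    ∃ G, IsEntropicProcess P ℱ T β G ∧ G T = Z := by
  obtain ⟨G, hGT, hmeas, hrec⟩ := exists_seq_of_backward_step
    (p := fun s => MeasBdd (ℱ s)) (T := T)
    (fun s hs Y hY => (hY.mono (ℱ.le (s + 1))).exists_condExp_exp_mul_ae_eq (P := P) (ℱ.le s)
      (hβ (s + 1) hs)) hZ
  exact ⟨G, ⟨hmeas, hrec⟩, hGT⟩

lemma zero [IsFiniteMeasure P] : IsEntropicProcess P ℱ T β (fun _ _ => 0) where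
  measBdd _ _ := MeasBdd.const 0
  condExp_exp_succ s _ := by simp [condExp_const (ℱ.le s)]

lemma ae_eq_inv_mul_log_condExp_exp (hG : IsEntropicProcess P ℱ T β G) (ht : t < T)
    (hβ : β (t + 1) ≠ 0) {Y : Ω → ℝ} (hY : Y =ᵐ[P] G (t + 1)) :
    G t =ᵐ[P] fun ω => (β (t + 1))⁻¹ *
      Real.log ((P[fun ω' => Real.exp (β (t + 1) * Y ω') | ℱ t]) ω) := by
  have hexp : (fun ω => Real.exp (β (t + 1) * Y ω)) =ᵐ[P]
      fun ω => Real.exp (β (t + 1) * G (t + 1) ω) :=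
    hY.fun_comp fun y => Real.exp (β (t + 1) * y)
  filter_upwards [(condExp_congr_ae hexp).trans (hG.condExp_exp_succ t ht)] with ω hω
  rw [hω, Real.log_exp, inv_mul_cancel_left₀ hβ]

end IsEntropicProcess

/-- `α_0, …, α_T` are positive risk aversions and `β_r` is the aggregate risk aversion of the times
`r, …, T`, that is, their reciprocals (risk tolerances) add up. -/
structure IsAggregateRiskAversion (T : ℕ) (α β : ℕ → ℝ) : Prop where
  pos : ∀ s ≤ T, 0 < α s
  inv_eq_sum : ∀ r ≤ T, (β r)⁻¹ = ∑ s ∈ Finset.Icc r T, (α s)⁻¹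

lemma IsAggregateRiskAversion.aggregate_pos (hαβ : IsAggregateRiskAversion T α β) {r : ℕ}
    (hr : r ≤ T) : 0 < β r := by
  rw [← inv_pos, hαβ.inv_eq_sum r hr]
  exact Finset.sum_pos (fun s hs => inv_pos.2 (hαβ.pos s (Finset.mem_Icc.1 hs).2))
    (Finset.nonempty_Icc.2 hr)

/-- The logarithm `L` of the optimal density for the position `K - G_T` at time `t`: it starts at
`β_t (G_t - K)` and has increments `β_{r+1} (G_{r+1} - G_r)`. -/
noncomputable def logDensity (β : ℕ → ℝ) (G : ℕ → Ω → ℝ) (t : ℕ) (K : Ω → ℝ) (s : ℕ) (ω : Ω) :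
    ℝ :=
  β t * (G t ω - K ω) + ∑ r ∈ Finset.Ico t s, β (r + 1) * (G (r + 1) ω - G r ω)

lemma logDensity_self (ω : Ω) : logDensity β G t K t ω = β t * (G t ω - K ω) := by
  simp [logDensity]

lemma logDensity_succ {s : ℕ} (hs : t ≤ s) (ω : Ω) : logDensity β G t K (s + 1) ω =
    logDensity β G t K s ω + β (s + 1) * (G (s + 1) ω - G s ω) := by
  rw [logDensity, Finset.sum_Ico_succ_top hs, ← add_assoc, logDensity]

lemma sum_Icc_mul_add_sum_Ico {R : Type*} [CommSemiring R] (a d : ℕ → R) (c : R) (t T : ℕ) :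
    ∑ s ∈ Finset.Icc t T, a s * (c + ∑ r ∈ Finset.Ico t s, d r) =
      (∑ s ∈ Finset.Icc t T, a s) * c +
        ∑ r ∈ Finset.Ico t T, (∑ s ∈ Finset.Icc (r + 1) T, a s) * d r := by
  simp only [mul_add, Finset.sum_add_distrib, Finset.mul_sum, Finset.sum_mul]
  congr 1
  refine Finset.sum_comm' fun s r => ?_
  simp only [Finset.mem_Icc, Finset.mem_Ico]
  omega

lemma IsAggregateRiskAversion.sum_inv_mul_logDensity (hαβ : IsAggregateRiskAversion T α β)
    (ht : t ≤ T) (ω : Ω) :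
    ∑ s ∈ Finset.Icc t T, (α s)⁻¹ * logDensity β G t K s ω = G T ω - K ω := by
  have hincr (r) (hr : r ∈ Finset.Ico t T) :
      (∑ s ∈ Finset.Icc (r + 1) T, (α s)⁻¹) * (β (r + 1) * (G (r + 1) ω - G r ω)) =
        G (r + 1) ω - G r ω := by
    have hrT : r + 1 ≤ T := (Finset.mem_Ico.1 hr).2
    rw [← hαβ.inv_eq_sum _ hrT, inv_mul_cancel_left₀ (hαβ.aggregate_pos hrT).ne']
  simp only [logDensity]
  rw [sum_Icc_mul_add_sum_Ico, ← hαβ.inv_eq_sum t ht,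
    inv_mul_cancel_left₀ (hαβ.aggregate_pos ht).ne', Finset.sum_congr rfl hincr,
    Finset.sum_Ico_sub (fun r => G r ω) ht]
  ring

/-- The optimal diversification `X_s = -L_s / α_s` of the position `K - G_T` at time `t`, where `L`
is the logarithm of the optimal density. -/
noncomputable def optimalDiv (α β : ℕ → ℝ) (G : ℕ → Ω → ℝ) (t : ℕ) (K : Ω → ℝ) (s : ℕ) (ω : Ω) :
    ℝ :=
  -(α s)⁻¹ * logDensity β G t K s ω

lemma neg_mul_optimalDiv {s : ℕ} (hα : α s ≠ 0) (ω : Ω) :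
    -α s * optimalDiv α β G t K s ω = logDensity β G t K s ω := by
  rw [optimalDiv, neg_mul, neg_mul, mul_neg, neg_neg, mul_inv_cancel_left₀ hα]

namespace IsEntropicProcess

lemma measBdd_logDensity (hG : IsEntropicProcess P ℱ T β G) (hK : MeasBdd (ℱ t) K) {s : ℕ}
    (hs : s ∈ Finset.Icc t T) : MeasBdd (ℱ s) (logDensity β G t K s) := by
  obtain ⟨hts, hsT⟩ := Finset.mem_Icc.1 hs
  have hGs {r : ℕ} (hr : r ≤ s) : MeasBdd (ℱ s) (G r) :=
    (hG.measBdd r (hr.trans hsT)).mono (ℱ.mono hr)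
  refine (((hGs hts).sub (hK.mono (ℱ.mono hts))).const_mul _).add (MeasBdd.sum _ fun r hr => ?_)
  have hrs := (Finset.mem_Ico.1 hr).2
  exact ((hGs hrs).sub (hGs hrs.le)).const_mul _

lemma isDiv1_optimalDiv (hG : IsEntropicProcess P ℱ T β G)
    (hαβ : IsAggregateRiskAversion T α β) (ht : t ≤ T) (hK : MeasBdd (ℱ t) K) :
    IsDiv1 P ℱ t T (fun ω => K ω - G T ω) (optimalDiv α β G t K) := by
  refine ⟨fun s hs => (hG.measBdd_logDensity hK hs).const_mul _, Eventually.of_forall fun ω => ?_⟩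
  simp only [optimalDiv, neg_mul, Finset.sum_neg_distrib, hαβ.sum_inv_mul_logDensity ht, neg_sub]

variable [IsFiniteMeasure P]

lemma condExp_exp_logDensity_succ (hG : IsEntropicProcess P ℱ T β G) (hK : MeasBdd (ℱ t) K)
    {s : ℕ} (hs : s ∈ Finset.Ico t T) :
    P[fun ω => Real.exp (logDensity β G t K (s + 1) ω) | ℱ s] =ᵐ[P]
      fun ω => Real.exp (logDensity β G t K s ω) := by
  obtain ⟨hts, hsT⟩ := Finset.mem_Ico.1 hs
  have hL : MeasBdd (ℱ s) fun ω => Real.exp (logDensity β G t K s ω - β (s + 1) * G s ω) :=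
    ((hG.measBdd_logDensity hK (Finset.Ico_subset_Icc_self hs)).sub
      ((hG.measBdd s hsT.le).const_mul _)).exp
  have hGsucc : Integrable (fun ω => Real.exp (β (s + 1) * G (s + 1) ω)) P :=
    (((hG.measBdd (s + 1) hsT).mono (ℱ.le _)).const_mul _).exp.integrable
  have hfactor (ω : Ω) : Real.exp (logDensity β G t K (s + 1) ω) =
      Real.exp (β (s + 1) * G (s + 1) ω) *
        Real.exp (logDensity β G t K s ω - β (s + 1) * G s ω) := by
    rw [logDensity_succ hts, ← Real.exp_add]
    ring_nf
  simp only [hfactor]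
  filter_upwards [hL.condExp_mul (ℱ.le s) hGsucc, hG.condExp_exp_succ s hsT] with ω hmul hrec
  rw [hmul, hrec, ← Real.exp_add, add_sub_cancel]

lemma condExp_exp_logDensity (hG : IsEntropicProcess P ℱ T β G) (hK : MeasBdd (ℱ t) K)
    {r s : ℕ} (htr : t ≤ r) (hrs : r ≤ s) (hsT : s ≤ T) :
    P[fun ω => Real.exp (logDensity β G t K s ω) | ℱ r] =ᵐ[P]
      fun ω => Real.exp (logDensity β G t K r ω) := by
  have hexp (s) (hs : s ∈ Finset.Icc t T) := (hG.measBdd_logDensity hK hs).exp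
  exact condExp_ae_eq_of_condExp_succ_ae_eq
    (M := fun s ω => Real.exp (logDensity β G t K s ω))
    (fun s hs => (hexp s hs).1.stronglyMeasurable)
    (fun s hs => ((hexp s hs).mono (ℱ.le s)).integrable)
    (fun s hs => hG.condExp_exp_logDensity_succ hK hs) htr hrs hsT

lemma integrable_exp_logDensity (hG : IsEntropicProcess P ℱ T β G) (hK : MeasBdd (ℱ t) K) {s : ℕ}
    (hs : s ∈ Finset.Icc t T) : Integrable (fun ω => Real.exp (logDensity β G t K s ω)) P :=
  ((hG.measBdd_logDensity hK hs).exp.mono (ℱ.le s)).integrable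

lemma integrable_exp_logDensity_mul_log (hG : IsEntropicProcess P ℱ T β G)
    (hK : MeasBdd (ℱ t) K) {s : ℕ} (hs : s ∈ Finset.Icc t T) :
    Integrable (fun ω => Real.exp (logDensity β G t K s ω) *
      Real.log (Real.exp (logDensity β G t K s ω))) P := by
  simp only [Real.log_exp]
  exact ((hG.measBdd_logDensity hK hs).mono (ℱ.le s)).integrable_mul
    (hG.integrable_exp_logDensity hK hs)

lemma isEntropyMartingale_exp_logDensity (hG : IsEntropicProcess P ℱ T β G)
    (hK : MeasBdd (ℱ t) K) :
    IsEntropyMartingale P ℱ t T fun s ω => Real.exp (logDensity β G t K s ω) where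
  integrable _ hs := hG.integrable_exp_logDensity hK hs
  nonneg _ _ := Eventually.of_forall fun _ => (Real.exp_pos _).le
  integrable_klFun _ hs :=
    ((hG.integrable_exp_logDensity_mul_log hK hs).add (integrable_const 1)).sub
      (hG.integrable_exp_logDensity hK hs)
  condExp_ae_eq _ hs :=
    hG.condExp_exp_logDensity hK (Finset.mem_Icc.1 hs).1 (Finset.mem_Icc.1 hs).2 le_rfl

lemma isPosMartOne_exp_logDensity (hG : IsEntropicProcess P ℱ T β G) (ht : t ≤ T) :
    IsPosMartOne P ℱ t T fun s ω => Real.exp (logDensity β G t (G t) s ω) := by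
  have hGt := hG.measBdd t ht
  refine ⟨fun s hs => ⟨(hG.measBdd_logDensity hGt hs).exp.1, hG.integrable_exp_logDensity hGt hs,
      Eventually.of_forall fun _ => Real.exp_pos _, hG.integrable_exp_logDensity_mul_log hGt hs⟩,
    fun r hr s hs hrs => hG.condExp_exp_logDensity hGt (Finset.mem_Icc.1 hr).1 hrs
      (Finset.mem_Icc.1 hs).2,
    Eventually.of_forall fun ω => ?_⟩
  simp only [logDensity_self, sub_self, mul_zero, Real.exp_zero]

lemma condExp_expUtility_optimalDiv (hG : IsEntropicProcess P ℱ T β G) (hK : MeasBdd (ℱ t) K)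
    {s : ℕ} (hs : s ∈ Finset.Icc t T) (hα : α s ≠ 0) :
    P[fun ω => expUtility (α s) (optimalDiv α β G t K s ω) | ℱ t] =ᵐ[P]
      fun ω => (α s)⁻¹ * (1 - Real.exp (logDensity β G t K t ω)) := by
  obtain ⟨hts, hsT⟩ := Finset.mem_Icc.1 hs
  simp only [expUtility, neg_mul_optimalDiv hα]
  have hsub := condExp_sub (integrable_const (1 : ℝ)) (hG.integrable_exp_logDensity hK hs) (ℱ t)
  rw [condExp_const (ℱ.le t)] at hsub
  exact (condExp_smul (α s)⁻¹ _ (ℱ t)).trans ((hsub.trans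
    (EventuallyEq.rfl.sub (hG.condExp_exp_logDensity hK le_rfl hts hsT))).const_smul _)

lemma utilSum1_optimalDiv_ae_eq (hG : IsEntropicProcess P ℱ T β G)
    (hαβ : IsAggregateRiskAversion T α β) (ht : t ≤ T) (hK : MeasBdd (ℱ t) K) :
    utilSum1 P ℱ (fun s => expUtility (α s)) t T (optimalDiv α β G t K) =ᵐ[P]
      fun ω => expUtility (β t) (K ω - G t ω) := by
  filter_upwards [(Finset.eventually_all _).2 fun s hs => hG.condExp_expUtility_optimalDiv hK hs
    (hαβ.pos s (Finset.mem_Icc.1 hs).2).ne'] with ω hterms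
  rw [utilSum1, Finset.sum_congr rfl hterms, ← Finset.sum_mul, ← hαβ.inv_eq_sum t ht,
    logDensity_self, expUtility, neg_mul, ← mul_neg, neg_sub]

lemma dualObjective_exp_logDensity_ae_eq (hG : IsEntropicProcess P ℱ T β G)
    (hαβ : IsAggregateRiskAversion T α β) (ht : t ≤ T) (hK : MeasBdd (ℱ t) K) :
    dualObjective P ℱ α t T (fun ω => K ω - G T ω)
        (fun s ω => Real.exp (logDensity β G t K s ω)) =ᵐ[P]
      fun ω => expUtility (β t) (K ω - G t ω) := by
  have hα (s) (hs : s ∈ Finset.Icc t T) : α s ≠ 0 := (hαβ.pos s (Finset.mem_Icc.1 hs).2).ne'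
  refine EventuallyEq.trans ?_ (hG.utilSum1_optimalDiv_ae_eq hαβ ht hK)
  exact ((hG.isEntropyMartingale_exp_logDensity hK).utilSum1_ae_eq_dualObjective ht
    (hG.isDiv1_optimalDiv hαβ ht hK) hα fun s hs ω => by rw [neg_mul_optimalDiv (hα s hs)]).symm

theorem isEssSupOf_utilSum1 (hG : IsEntropicProcess P ℱ T β G)
    (hαβ : IsAggregateRiskAversion T α β) (ht : t ≤ T) (hK : MeasBdd (ℱ t) K) :
    IsEssSupOf P
      {g | ∃ X : ℕ → Ω → ℝ, IsDiv1 P ℱ t T (fun ω => K ω - G T ω) X ∧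
        g = utilSum1 P ℱ (fun s => expUtility (α s)) t T X}
      (fun ω => expUtility (β t) (K ω - G t ω)) := by
  refine IsEssSupOf.of_mem ?_ ⟨_, hG.isDiv1_optimalDiv hαβ ht hK, rfl⟩
    (hG.utilSum1_optimalDiv_ae_eq hαβ ht hK)
  rintro _ ⟨X, hX, rfl⟩
  exact ((hG.isEntropyMartingale_exp_logDensity hK).utilSum1_le_dualObjective ht hX
    fun s hs => hαβ.pos s (Finset.mem_Icc.1 hs).2).trans
      (hG.dualObjective_exp_logDensity_ae_eq hαβ ht hK).le

theorem isEssSupOf_entropicObjective (hG : IsEntropicProcess P ℱ T β G)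
    (hαβ : IsAggregateRiskAversion T α β) (ht : t ≤ T) :
    IsEssSupOf P
      {g | ∃ M : ℕ → Ω → ℝ, IsPosMartOne P ℱ t T M ∧ g = entropicObjective P ℱ α t T (G T) M}
      (G t) := by
  have hGt := hG.measBdd t ht
  have hGT := hG.measBdd T le_rfl
  have hopt := hG.isPosMartOne_exp_logDensity ht
  refine IsEssSupOf.of_mem ?_ ⟨_, hopt, rfl⟩ ?_
  · rintro _ ⟨M, hM, rfl⟩
    filter_upwards [hG.utilSum1_optimalDiv_ae_eq hαβ ht hGt,
      (hM.isEntropyMartingale ht).utilSum1_le_dualObjective ht (hG.isDiv1_optimalDiv hαβ ht hGt)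
        fun s hs => hαβ.pos s (Finset.mem_Icc.1 hs).2,
      hM.dualObjective_sub_ae_eq (α := α) ht hGt hGT] with ω hutil hle hdual
    rw [hutil, hdual, sub_self, expUtility_zero_right] at hle
    exact sub_nonneg.1 hle
  · filter_upwards [hG.dualObjective_exp_logDensity_ae_eq hαβ ht hGt,
      hopt.dualObjective_sub_ae_eq (α := α) ht hGt hGT] with ω hvalue hdual
    rw [hdual, sub_self, expUtility_zero_right] at hvalue
    exact (sub_eq_zero.1 hvalue).symm

theorem indifferencePremium_ae_eq (hG : IsEntropicProcess P ℱ T β G)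
    (hαβ : IsAggregateRiskAversion T α β) (ht : t ≤ T) {U : (Ω → ℝ) → Ω → ℝ}
    (hU : ∀ W, MeasBdd (ℱ T) W → IsEssSupOf P
      {g | ∃ X : ℕ → Ω → ℝ, IsDiv1 P ℱ t T W X ∧
        g = utilSum1 P ℱ (fun s => expUtility (α s)) t T X} (U W))
    {H : Ω → ℝ}
    (hH : IsEssInfOf P
      {K | MeasBdd (ℱ t) K ∧ U (fun _ => 0) ≤ᵐ[P] U (fun ω => K ω - G T ω)} H) :
    H =ᵐ[P] G t := by
  have hGt := hG.measBdd t ht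
  have hU0 : U (fun _ => 0) =ᵐ[P] fun _ => 0 := by
    have hzero := (zero (ℱ := ℱ)).isEssSupOf_utilSum1 (P := P) hαβ ht (MeasBdd.const 0)
    simp only [sub_zero, expUtility_zero_right] at hzero
    exact (hU _ (MeasBdd.const 0)).ae_eq hzero
  have hUK {K : Ω → ℝ} (hK : MeasBdd (ℱ t) K) :
      U (fun ω => K ω - G T ω) =ᵐ[P] fun ω => expUtility (β t) (K ω - G t ω) :=
    (hU _ ((hK.mono (ℱ.mono ht)).sub (hG.measBdd T le_rfl))).ae_eq
      (hG.isEssSupOf_utilSum1 hαβ ht hK)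
  refine (hH.1 _ ⟨hGt, ?_⟩).antisymm (hH.2 _ ?_)
  · filter_upwards [hU0, hUK hGt] with ω h0 hGω
    rw [h0, hGω, sub_self, expUtility_zero_right]
  · rintro K ⟨hK, hle⟩
    filter_upwards [hU0, hUK hK, hle] with ω h0 hKω hle
    rw [h0, hKω, expUtility_nonneg_iff (hαβ.aggregate_pos ht)] at hle
    exact sub_nonneg.1 hle

end IsEntropicProcess

/-- Theorem 2.24, first part: in the exponential case, the indifference
premium satisfies the backward recursion and the entropic dual representation. -/
theorem exponential_premium_recursion_and_dual
    {m0 : MeasurableSpace Ω} (P : Measure Ω) [IsProbabilityMeasure P]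
    (ℱ : Filtration ℕ m0) (T : ℕ) (hT : 0 < T)
    (α : ℕ → ℝ) (hα : ∀ s, 0 < α s)
    (u : ℕ → ℝ → ℝ) (hu : ∀ s, u s = fun x => (α s)⁻¹ * (1 - Real.exp (-(α s) * x)))
    (β : ℕ → ℝ) (hβpos : ∀ r, r ≤ T → 0 < β r)
    (hβ : ∀ r, r ≤ T → (β r)⁻¹ = ∑ s ∈ Finset.Icc r T, (α s)⁻¹)
    (U : ℕ → (Ω → ℝ) → Ω → ℝ)
    (hU : ∀ t, t ≤ T → ∀ W : Ω → ℝ, MeasBdd (ℱ T) W →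
      IsEssSupOf P
        {g | ∃ X : ℕ → Ω → ℝ, IsDiv1 P ℱ t T W X ∧ g = utilSum1 P ℱ u t T X}
        (U t W))
    (H : ℕ → (Ω → ℝ) → Ω → ℝ)
    (hH : ∀ t, t ≤ T → ∀ W : Ω → ℝ, MeasBdd (ℱ T) W →
      IsEssInfOf P
        {K | MeasBdd (ℱ t) K ∧ U t (fun _ => 0) ≤ᵐ[P] U t (fun ω => K ω - W ω)}
        (H t W))
    (Z : Ω → ℝ) (hZ : MeasBdd (ℱ T) Z) :
    -- terminal condition:
    (H T Z =ᵐ[P] Z) ∧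
    -- backward recursion:
    (∀ t, t < T → H t Z =ᵐ[P] fun ω =>
      (β (t + 1))⁻¹ *
        Real.log ((P[fun ω' => Real.exp (β (t + 1) * H (t + 1) Z ω') | ℱ t]) ω)) ∧
    -- dual (entropic) representation:
    ∀ t, t ≤ T →
      IsEssSupOf P
        {g | ∃ M : ℕ → Ω → ℝ, IsPosMartOne P ℱ t T M ∧
          g = fun ω => (P[fun ω' => M T ω' * Z ω' | ℱ t]) ω -
            ∑ s ∈ Finset.Icc t T,
              (α s)⁻¹ * (P[fun ω' => M s ω' * Real.log (M s ω') | ℱ t]) ω}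
        (H t Z) := by
  obtain rfl : u = fun s => expUtility (α s) := funext hu
  obtain ⟨G, hG, rfl⟩ :=
    IsEntropicProcess.exists_terminal_eq (P := P) (fun s hs => (hβpos s hs).ne') hZ
  have hαβ : IsAggregateRiskAversion T α β := ⟨fun s _ => hα s, hβ⟩
  have hHG (t) (ht : t ≤ T) : H t (G T) =ᵐ[P] G t :=
    hG.indifferencePremium_ae_eq hαβ ht (hU t ht) (hH t ht (G T) hZ)
  refine ⟨hHG T le_rfl, fun t ht => ?_, fun t ht => ?_⟩
  · exact (hHG t ht.le).trans
      (hG.ae_eq_inv_mul_log_condExp_exp ht (hβpos (t + 1) ht).ne' (hHG (t + 1) ht))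
  · exact (hG.isEssSupOf_entropicObjective hαβ ht).congr_ae (hHG t ht).symm
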